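/- arXiv:2402.13156 — 3 statements merged into one kernel-verified Lean document; each statement's English description precedes it below -/
import Mathlib

section
/- Fix a principal–agent instance with uncertainty level d(C) ≤ 1/2. For every cost vector c ∈ C and every deterministic contract p* that is optimal against c, i.e. U^p(p*,c) = OPT(c), the contract p̃ := p* + √(2·d(C))·(r − p*) satisfies U^p(p̃, c̃) ≥ OPT(c) − 2·√(2·d(C)) for every c̃ ∈ C. -/
open Finset

variable {A Ω : Type} [Fintype A] [Fintype Ω] [Nonempty A] [Nonempty Ω]

/-- Agent's expected utility `U^a(p,c,a)` of action `a` under contract `p` and costs `c`. -/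
noncomputable def Uag (F : A → Ω → ℝ) (p : Ω → ℝ) (c : A → ℝ) (a : A) : ℝ :=
  (∑ ω, F a ω * p ω) - c a

/-- Principal's expected utility when the agent plays action `a` under contract `p`. -/
noncomputable def prinAct (F : A → Ω → ℝ) (r p : Ω → ℝ) (a : A) : ℝ :=
  ∑ ω, F a ω * (r ω - p ω)

/-- Principal's expected utility `U^p(p,c)`: the agent plays a best response,
with ties among best responses broken in favor of the principal. -/
noncomputable def Uprin (F : A → Ω → ℝ) (r p : Ω → ℝ) (c : A → ℝ) : ℝ :=
  sSup { x | ∃ a : A, (∀ a' : A, Uag F p c a' ≤ Uag F p c a) ∧ x = prinAct F r p a }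

/-- A deterministic contract: nonnegative payments. -/
def IsContract (p : Ω → ℝ) : Prop := ∀ ω, 0 ≤ p ω

/-- `OPT(c)`: the supremum over contracts of the principal's expected utility against `c`. -/
noncomputable def OPT (F : A → Ω → ℝ) (r : Ω → ℝ) (c : A → ℝ) : ℝ :=
  sSup { x | ∃ p : Ω → ℝ, IsContract p ∧ x = Uprin F r p c }

/-- The regret `R(p)` of a deterministic contract `p`. -/
noncomputable def regret (F : A → Ω → ℝ) (r : Ω → ℝ) (C : Set (A → ℝ)) (p : Ω → ℝ) : ℝ :=
  sSup { x | ∃ c ∈ C, x = OPT F r c - Uprin F r p c }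

/-- Uncertainty level `d(C)`: the L∞-diameter of the uncertainty set. -/
noncomputable def uncLevel (C : Set (A → ℝ)) : ℝ :=
  sSup { x | ∃ c ∈ C, ∃ c' ∈ C, x = ‖c - c'‖ }

/-- The assumptions defining a principal–agent instance `(A, Ω, r, C, F)`. -/
structure IsPAInstance (F : A → Ω → ℝ) (r : Ω → ℝ) (C : Set (A → ℝ)) : Prop where
  r_mem : ∀ ω, r ω ∈ Set.Icc (0:ℝ) 1
  F_mem : ∀ a ω, F a ω ∈ Set.Icc (0:ℝ) 1
  F_sum : ∀ a, ∑ ω, F a ω = 1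
  C_nonempty : C.Nonempty
  C_mem : ∀ c ∈ C, ∀ a, c a ∈ Set.Icc (0:ℝ) 1
  zero_action : ∃ a : A, ∀ c ∈ C, c a = 0

/-! Moving a contract `p` a fraction `s` of the way towards the reward vector `r` adds `s` times the
principal's utility to the agent's utility, and scales the principal's utility by `1 - s`. So if
`a` is a best response to `p` and `b` one to the new contract, under costs that differ by at most
`δ`, the agent's two optimality inequalities add up to `s (P a - P b) ≤ 2 δ`, where `P` is the
principal's utility under `p`. The loss `P a - (1 - s) P b = (P a - P b) + s P b` is therefore at
most `2 δ / s + s`, and `s = √(2 δ)` balances the two terms. -/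

section

variable {A Ω : Type} {F : A → Ω → ℝ} {r p : Ω → ℝ} {c c' : A → ℝ} {a b : A} {s δ M : ℝ}

/-- The contract `p + s (r - p)`, obtained by moving `p` towards the reward vector `r`, i.e.
towards the linear contract that hands the whole reward to the agent. The parameter `s` is not
restricted to `[0, 1]`, so payments may be negative for `s > 1`. -/
def linearizedContract (r p : Ω → ℝ) (s : ℝ) : Ω → ℝ :=
  fun ω => p ω + s * (r ω - p ω)

@[simp]
theorem linearizedContract_zero (r p : Ω → ℝ) : linearizedContract r p 0 = p :=
  funext fun ω => by simp [linearizedContract]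

variable [Fintype Ω]

/-- Action `a` is a best response, `a ∈ A*(p, c)`, of an agent with costs `c` to the contract
`p`; this is the condition under which `Uprin` takes its supremum. -/
def IsBestResponse (F : A → Ω → ℝ) (p : Ω → ℝ) (c : A → ℝ) (a : A) : Prop :=
  ∀ a', Uag F p c a' ≤ Uag F p c a

theorem exists_isBestResponse_Uprin_eq [Finite A] [Nonempty A]
    (F : A → Ω → ℝ) (r p : Ω → ℝ) (c : A → ℝ) :
    ∃ a, IsBestResponse F p c a ∧ Uprin F r p c = prinAct F r p a := by
  have finite_values : {x | ∃ a, IsBestResponse F p c a ∧ x = prinAct F r p a}.Finite :=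
    (Set.finite_range (prinAct F r p)).subset fun _ ⟨a, _, hx⟩ => ⟨a, hx.symm⟩
  obtain ⟨a, ha⟩ := Finite.exists_max (Uag F p c)
  have nonempty_values : {x | ∃ a, IsBestResponse F p c a ∧ x = prinAct F r p a}.Nonempty :=
    ⟨_, a, ha, rfl⟩
  exact nonempty_values.csSup_mem finite_values

theorem prinAct_le (hF : ∀ ω, 0 ≤ F a ω) (hF_sum : ∑ ω, F a ω = 1)
    (hM : ∀ ω, r ω - p ω ≤ M) : prinAct F r p a ≤ M :=
  calc ∑ ω, F a ω * (r ω - p ω)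
    _ ≤ ∑ ω, F a ω * M := sum_le_sum fun ω _ => mul_le_mul_of_nonneg_left (hM ω) (hF ω)
    _ = M := by rw [← sum_mul, hF_sum, one_mul]

theorem prinAct_linearizedContract (F : A → Ω → ℝ) (r p : Ω → ℝ) (s : ℝ) (a : A) :
    prinAct F r (linearizedContract r p s) a = (1 - s) * prinAct F r p a := by
  simp only [prinAct, linearizedContract, mul_sum]
  exact sum_congr rfl fun ω _ => by ring

theorem Uag_linearizedContract (F : A → Ω → ℝ) (r p : Ω → ℝ) (s : ℝ) (c : A → ℝ) (a : A) :
    Uag F (linearizedContract r p s) c a = Uag F p c a + s * prinAct F r p a := by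
  simp only [Uag, prinAct, linearizedContract, mul_add, sum_add_distrib, mul_sum,
    mul_left_comm s]
  ring

theorem mul_prinAct_sub_le_of_isBestResponse (hδ : ∀ x, |c x - c' x| ≤ δ)
    (ha : IsBestResponse F p c a) (hb : IsBestResponse F (linearizedContract r p s) c' b) :
    s * (prinAct F r p a - prinAct F r p b) ≤ 2 * δ := by
  have a_beats_b := ha b
  have b_beats_a := hb a
  simp only [Uag_linearizedContract] at b_beats_a
  simp only [Uag] at a_beats_b b_beats_a
  linarith [neg_le_of_abs_le (hδ a), le_of_abs_le (hδ b)]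

theorem Uprin_sub_le_Uprin_linearizedContract [Finite A] [Nonempty A]
    (hM : ∀ x, prinAct F r p x ≤ M) (hδ : ∀ x, |c x - c' x| ≤ δ) (hs : 0 < s) :
    Uprin F r p c - (2 * δ / s + s * M) ≤ Uprin F r (linearizedContract r p s) c' := by
  obtain ⟨a, ha, hUa⟩ := exists_isBestResponse_Uprin_eq F r p c
  obtain ⟨b, hb, hUb⟩ := exists_isBestResponse_Uprin_eq F r (linearizedContract r p s) c'
  have loss_of_deviation : prinAct F r p a - prinAct F r p b ≤ 2 * δ / s :=
    (le_div_iff₀' hs).2 (mul_prinAct_sub_le_of_isBestResponse hδ ha hb)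
  have loss_of_scaling : s * prinAct F r p b ≤ s * M := mul_le_mul_of_nonneg_left (hM b) hs.le
  rw [hUa, hUb, prinAct_linearizedContract]
  linarith

theorem norm_sub_le_uncLevel [Fintype A] {C : Set (A → ℝ)}
    (hC : Bornology.IsBounded C) (hc : c ∈ C) (hc' : c' ∈ C) :
    ‖c - c'‖ ≤ uncLevel C := by
  obtain ⟨D, hD⟩ := Metric.isBounded_iff.1 hC
  refine le_csSup ⟨D, ?_⟩ ⟨c, hc, c', hc', rfl⟩
  rintro _ ⟨x, hx, y, hy, rfl⟩
  exact dist_eq_norm x y ▸ hD hx hy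

theorem IsPAInstance.isBounded {C : Set (A → ℝ)} (h : IsPAInstance F r C) :
    Bornology.IsBounded C :=
  Bornology.forall_isBounded_image_eval_iff.1 fun a =>
    (Metric.isBounded_Icc 0 1).subset (Set.image_subset_iff.2 fun c hc => h.C_mem c hc a)

theorem linearized_optimal_contract_guarantee_general [Finite A] [Nonempty A]
    (hF : ∀ a ω, 0 ≤ F a ω) (hF_sum : ∀ a, ∑ ω, F a ω = 1) (hr : ∀ ω, r ω ≤ 1)
    (hp : IsContract p) (hδ : ∀ a, |c a - c' a| ≤ δ) :
    Uprin F r p c - 2 * √(2 * δ) ≤ Uprin F r (linearizedContract r p √(2 * δ)) c' := by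
  have δ_nonneg : 0 ≤ δ := (abs_nonneg _).trans (hδ (Classical.arbitrary A))
  rcases δ_nonneg.eq_or_lt with rfl | δ_pos
  · have costs_eq : c = c' := funext fun a => sub_eq_zero.1 (abs_nonpos_iff.1 (hδ a))
    simp [costs_eq]
  · have prinAct_le_one (a : A) : prinAct F r p a ≤ 1 :=
      prinAct_le (hF a) (hF_sum a) fun ω => by linarith [hr ω, hp ω]
    have guarantee := Uprin_sub_le_Uprin_linearizedContract (s := √(2 * δ)) prinAct_le_one hδ
      (by positivity)
    rw [Real.div_sqrt] at guarantee
    linarith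

end

/-- In an instance with `d(C) ≤ 1/2`, for every `c ∈ C` and optimal
contract `p*` against `c`, the contract `p̃ := p* + √(2 d(C)) (r − p*)` satisfies
`U^p(p̃, c̃) ≥ OPT(c) − 2√(2 d(C))` for every `c̃ ∈ C`. -/
theorem linearized_optimal_contract_guarantee
    {A Ω : Type} [Fintype A] [Fintype Ω] [Nonempty A] [Nonempty Ω]
    (F : A → Ω → ℝ) (r : Ω → ℝ) (C : Set (A → ℝ))
    (hInst : IsPAInstance F r C)
    (hd : uncLevel C ≤ 1/2)
    (c : A → ℝ) (hc : c ∈ C)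
    (pstar : Ω → ℝ) (hpstar : IsContract pstar)
    (hopt : Uprin F r pstar c = OPT F r c)
    (ctil : A → ℝ) (hctil : ctil ∈ C) :
    Uprin F r (fun ω => pstar ω + Real.sqrt (2 * uncLevel C) * (r ω - pstar ω)) ctil
      ≥ OPT F r c - 2 * Real.sqrt (2 * uncLevel C) := by
  rw [← hopt]
  exact linearized_optimal_contract_guarantee_general (fun a ω => (hInst.F_mem a ω).1) hInst.F_sum
    (fun ω => (hInst.r_mem ω).2) hpstar fun a =>
      (norm_le_pi_norm (c - ctil) a).trans (norm_sub_le_uncLevel hInst.isBounded hc hctil)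
end

section
/- In any principal–agent instance, there exists a deterministic contract p* attaining the infimum of the regret over all deterministic contracts, i.e. R(p*) = inf over all p ∈ ℝ_{≥0}^Ω of R(p). -/
open Finset

variable {A Ω : Type} [Fintype A] [Fintype Ω] [Nonempty A] [Nonempty Ω]

open Filter Topology

/-!
For a fixed cost vector, the agent's tie-breaking in favor of the principal makes the principal's
utility upper semicontinuous in the contract, so the regret, a supremum of lower semicontinuous
functions, is lower semicontinuous. A contract with a large expected payment under some action has
a large expected payment under the action played, hence large regret, so expected payments are
bounded on every sublevel set of the regret. Payments on outcomes that no action can produce are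
not bounded by this, but setting them to zero changes no expected payment, hence not the regret. It
therefore suffices to minimize the regret over a compact box.
-/

section Maximizers

variable {ι α β : Type*}

/-- The set of maximizers of `f`. For `f = Uag F p c` this is the best-response set `A*(p,c)`. -/
def maximizers [LE α] (f : ι → α) : Set ι := {i | ∀ j, f j ≤ f i}

variable [Finite ι] [LinearOrder α]

theorem maximizers_nonempty [Nonempty ι] (f : ι → α) : (maximizers f).Nonempty :=
  Finite.exists_max f

theorem exists_mem_maximizers_eq_sSup [Nonempty ι] [ConditionallyCompleteLinearOrder β]
    (u : ι → α) (v : ι → β) : ∃ i ∈ maximizers u, v i = sSup (v '' maximizers u) :=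
  ((maximizers_nonempty u).image v).csSup_mem (Set.toFinite _)

theorem upperSemicontinuous_sSup_image_maximizers {X : Type*} [TopologicalSpace X] [Nonempty ι]
    [TopologicalSpace α] [OrderClosedTopology α] [ConditionallyCompleteLinearOrder β]
    {u : X → ι → α} {v : X → ι → β} (hu : ∀ i, Continuous fun x ↦ u x i)
    (hv : ∀ i, UpperSemicontinuous fun x ↦ v x i) :
    UpperSemicontinuous fun x ↦ sSup (v x '' maximizers (u x)) := by
  intro x y hy
  have eventually_lt_of_mem (i : ι) : ∀ᶠ z in 𝓝 x, i ∈ maximizers (u z) → v z i < y := by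
    by_cases hi : i ∈ maximizers (u x)
    · have hlt : v x i < y :=
        (le_csSup (Set.toFinite _).bddAbove (Set.mem_image_of_mem _ hi)).trans_lt hy
      exact (hv i x y hlt).mono fun z hz _ ↦ hz
    · obtain ⟨j, hij⟩ : ∃ j, u x i < u x j := by simpa [maximizers] using hi
      filter_upwards [(hu i).continuousAt.eventually_lt (hu j).continuousAt hij] with z hz hmem
      exact absurd (hmem j) hz.not_ge
  filter_upwards [eventually_all.mpr eventually_lt_of_mem] with z hz
  obtain ⟨i, hi, hsup⟩ := exists_mem_maximizers_eq_sSup (u z) (v z)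
  exact hsup ▸ hz i hi

end Maximizers

section Contracts

variable {A Ω : Type} [Fintype Ω] {F : A → Ω → ℝ}

theorem prinAct_eq_dotProduct_sub (F : A → Ω → ℝ) (r p : Ω → ℝ) (a : A) :
    prinAct F r p a = F a ⬝ᵥ r - F a ⬝ᵥ p :=
  dotProduct_sub (F a) r p

theorem Uprin_eq_sSup_image (F : A → Ω → ℝ) (r p : Ω → ℝ) (c : A → ℝ) :
    Uprin F r p c = sSup (prinAct F r p '' maximizers (Uag F p c)) := by
  simp only [Uprin, maximizers, Set.image, Set.mem_ofPred_eq, eq_comm]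

theorem regret_eq_iSup (F : A → Ω → ℝ) (r : Ω → ℝ) (C : Set (A → ℝ)) (p : Ω → ℝ) :
    regret F r C p = ⨆ c : C, (OPT F r c - Uprin F r p c) := by
  simp only [regret, iSup, Set.range, Subtype.exists, exists_prop, eq_comm]

theorem regret_congr (r : Ω → ℝ) (C : Set (A → ℝ)) {p q : Ω → ℝ}
    (hpq : ∀ a, F a ⬝ᵥ p = F a ⬝ᵥ q) : regret F r C p = regret F r C q := by
  have hUag : Uag F p = Uag F q := by
    funext c a
    exact congrArg (· - c a) (hpq a)
  have hprin : prinAct F r p = prinAct F r q := by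
    funext a
    simp only [prinAct_eq_dotProduct_sub, hpq]
  simp only [regret, Uprin, hUag, hprin]

theorem isContract_zero (Ω : Type) : IsContract (0 : Ω → ℝ) := fun _ ↦ le_rfl

section Bounds

variable [Finite A] [Nonempty A]

theorem exists_mem_maximizers_Uprin_eq (F : A → Ω → ℝ) (r p : Ω → ℝ) (c : A → ℝ) :
    ∃ a ∈ maximizers (Uag F p c), Uprin F r p c = F a ⬝ᵥ r - F a ⬝ᵥ p := by
  obtain ⟨a, ha, hsup⟩ := exists_mem_maximizers_eq_sSup (Uag F p c) (prinAct F r p)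
  exact ⟨a, ha, by rw [Uprin_eq_sSup_image, ← hsup, prinAct_eq_dotProduct_sub]⟩

theorem upperSemicontinuous_Uprin (F : A → Ω → ℝ) (r : Ω → ℝ) (c : A → ℝ) :
    UpperSemicontinuous fun p ↦ Uprin F r p c := by
  simp only [Uprin_eq_sSup_image]
  refine upperSemicontinuous_sSup_image_maximizers (fun a ↦ ?_) fun a ↦
    Continuous.upperSemicontinuous ?_
  · unfold Uag
    fun_prop
  · unfold prinAct
    fun_prop

theorem iInf_sub_le_Uprin (F : A → Ω → ℝ) (r p : Ω → ℝ) (c : A → ℝ) :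
    ⨅ a, (F a ⬝ᵥ r - F a ⬝ᵥ p) ≤ Uprin F r p c := by
  obtain ⟨a, -, hUprin⟩ := exists_mem_maximizers_Uprin_eq F r p c
  exact hUprin ▸ ciInf_le (Set.finite_range _).bddBelow a

theorem Uprin_le_iSup (hF : ∀ a ω, 0 ≤ F a ω) (r : Ω → ℝ) {p : Ω → ℝ} (hp : IsContract p)
    (c : A → ℝ) : Uprin F r p c ≤ ⨆ a, F a ⬝ᵥ r := by
  obtain ⟨a, -, hUprin⟩ := exists_mem_maximizers_Uprin_eq F r p c
  calc Uprin F r p c = F a ⬝ᵥ r - F a ⬝ᵥ p := hUprin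
    _ ≤ F a ⬝ᵥ r := sub_le_self _ (dotProduct_nonneg_of_nonneg (hF a) hp)
    _ ≤ ⨆ a, F a ⬝ᵥ r := le_ciSup (Set.finite_range fun a ↦ F a ⬝ᵥ r).bddAbove a

theorem OPT_le_iSup (hF : ∀ a ω, 0 ≤ F a ω) (r : Ω → ℝ) (c : A → ℝ) :
    OPT F r c ≤ ⨆ a, F a ⬝ᵥ r := by
  refine csSup_le ⟨_, 0, isContract_zero Ω, rfl⟩ ?_
  rintro _ ⟨p, hp, rfl⟩
  exact Uprin_le_iSup hF r hp c

theorem bddAbove_range_OPT_sub_Uprin (hF : ∀ a ω, 0 ≤ F a ω) (r : Ω → ℝ) (C : Set (A → ℝ))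
    (p : Ω → ℝ) : BddAbove (Set.range fun c : C ↦ OPT F r c - Uprin F r p c) := by
  refine ⟨(⨆ a, F a ⬝ᵥ r) - ⨅ a, (F a ⬝ᵥ r - F a ⬝ᵥ p), ?_⟩
  rintro _ ⟨c, rfl⟩
  exact sub_le_sub (OPT_le_iSup hF r c) (iInf_sub_le_Uprin F r p c)

theorem OPT_sub_Uprin_le_regret (hF : ∀ a ω, 0 ≤ F a ω) (r : Ω → ℝ) {C : Set (A → ℝ)}
    (p : Ω → ℝ) {c : A → ℝ} (hc : c ∈ C) : OPT F r c - Uprin F r p c ≤ regret F r C p :=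
  regret_eq_iSup F r C p ▸ le_ciSup (bddAbove_range_OPT_sub_Uprin hF r C p) ⟨c, hc⟩

theorem lowerSemicontinuous_regret (hF : ∀ a ω, 0 ≤ F a ω) (r : Ω → ℝ) (C : Set (A → ℝ)) :
    LowerSemicontinuous (regret F r C) := by
  simp only [funext (regret_eq_iSup F r C)]
  refine lowerSemicontinuous_ciSup (bddAbove_range_OPT_sub_Uprin hF r C) fun c p y hy ↦ ?_
  have hlt : Uprin F r p c < OPT F r c - y := lt_sub_comm.mp hy
  exact (upperSemicontinuous_Uprin F r c p _ hlt).mono fun q hq ↦ lt_sub_comm.mp hq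

theorem exists_dotProduct_le_regret_add (hF : ∀ a ω, 0 ≤ F a ω) (r : Ω → ℝ) {C : Set (A → ℝ)}
    (hC : C.Nonempty) : ∃ K, ∀ p a, F a ⬝ᵥ p ≤ regret F r C p + K := by
  obtain ⟨c, hc⟩ := hC
  refine ⟨(⨆ b, F b ⬝ᵥ r) + (⨆ b, c b) - (⨅ b, c b) - OPT F r c, fun p a ↦ ?_⟩
  obtain ⟨b, hb, hUprin⟩ := exists_mem_maximizers_Uprin_eq F r p c
  have best_response : F a ⬝ᵥ p - c a ≤ F b ⬝ᵥ p - c b := hb a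
  have reward_le_iSup : F b ⬝ᵥ r ≤ ⨆ b, F b ⬝ᵥ r :=
    le_ciSup (Set.finite_range fun b ↦ F b ⬝ᵥ r).bddAbove b
  have cost_le_iSup : c a ≤ ⨆ b, c b := le_ciSup (Set.finite_range c).bddAbove a
  have iInf_le_cost : ⨅ b, c b ≤ c b := ciInf_le (Set.finite_range c).bddBelow b
  linarith [OPT_sub_Uprin_le_regret hF r p hc]

end Bounds

/-- The outcomes that some action produces with nonzero weight. Payments on the other outcomes have
no effect on either party's expected utility. -/
def possibleOutcomes (F : A → Ω → ℝ) : Set Ω := {ω | ∃ a, F a ω ≠ 0}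

theorem dotProduct_indicator_possibleOutcomes (F : A → Ω → ℝ) (p : Ω → ℝ) (a : A) :
    F a ⬝ᵥ (possibleOutcomes F).indicator p = F a ⬝ᵥ p := by
  refine Finset.sum_congr rfl fun ω _ ↦ ?_
  by_cases hω : ω ∈ possibleOutcomes F
  · rw [Set.indicator_of_mem hω]
  · have hFω : F a ω = 0 := not_not.mp fun h ↦ hω ⟨a, h⟩
    rw [hFω, zero_mul, zero_mul]

theorem exists_indicator_possibleOutcomes_le (hF : ∀ a ω, 0 ≤ F a ω) (M : ℝ) :
    ∃ b : Ω → ℝ, ∀ p, IsContract p → (∀ a, F a ⬝ᵥ p ≤ M) →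
      (possibleOutcomes F).indicator p ≤ b := by
  have pointwise (ω : Ω) : ∃ b : ℝ, ∀ p, IsContract p → (∀ a, F a ⬝ᵥ p ≤ M) →
      (possibleOutcomes F).indicator p ω ≤ b := by
    by_cases hω : ω ∈ possibleOutcomes F
    · have ⟨a, ha⟩ := hω
      refine ⟨M / F a ω, fun p hp hM ↦ ?_⟩
      rw [Set.indicator_of_mem hω, le_div_iff₀' ((hF a ω).lt_of_ne' ha)]
      calc F a ω * p ω ≤ F a ⬝ᵥ p :=
            Finset.single_le_sum (f := fun ω ↦ F a ω * p ω)
              (fun ω _ ↦ mul_nonneg (hF a ω) (hp ω)) (Finset.mem_univ ω)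
        _ ≤ M := hM a
    · exact ⟨0, fun p _ _ ↦ (Set.indicator_of_notMem hω p).le⟩
  choose b hb using pointwise
  exact ⟨b, fun p hp hM ω ↦ hb ω p hp hM⟩

theorem exists_forall_regret_le_exists_mem_Icc [Finite A] [Nonempty A]
    (hF : ∀ a ω, 0 ≤ F a ω) (r : Ω → ℝ) {C : Set (A → ℝ)} (hC : C.Nonempty) (t : ℝ) :
    ∃ b : Ω → ℝ, ∀ p, IsContract p → regret F r C p ≤ t →
      ∃ q ∈ Set.Icc 0 b, regret F r C q = regret F r C p := by
  obtain ⟨K, hK⟩ := exists_dotProduct_le_regret_add hF r hC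
  obtain ⟨b, hb⟩ := exists_indicator_possibleOutcomes_le hF (t + K)
  refine ⟨b, fun p hp hpt ↦ ⟨(possibleOutcomes F).indicator p, ⟨?_, ?_⟩, ?_⟩⟩
  · exact Set.indicator_nonneg fun ω _ ↦ hp ω
  · exact hb p hp fun a ↦ (hK p a).trans (by gcongr)
  · exact regret_congr r C (dotProduct_indicator_possibleOutcomes F p)

theorem exists_isContract_forall_regret_le [Finite A] [Nonempty A]
    (hF : ∀ a ω, 0 ≤ F a ω) (r : Ω → ℝ) {C : Set (A → ℝ)} (hC : C.Nonempty) :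
    ∃ p, IsContract p ∧ ∀ q, IsContract q → regret F r C p ≤ regret F r C q := by
  obtain ⟨b, hb⟩ := exists_forall_regret_le_exists_mem_Icc hF r hC (regret F r C 0)
  obtain ⟨z, hz, hz_eq⟩ := hb 0 (isContract_zero Ω) le_rfl
  obtain ⟨p, hp, hmin⟩ :=
    ((lowerSemicontinuous_regret hF r C).lowerSemicontinuousOn _).exists_isMinOn
      ⟨z, hz⟩ isCompact_Icc
  refine ⟨p, hp.1, fun q hq ↦ ?_⟩
  rcases le_total (regret F r C q) (regret F r C 0) with hle | hge
  · obtain ⟨q', hq', hq'_eq⟩ := hb q hq hle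
    exact (hmin hq').trans_eq hq'_eq
  · exact (hmin hz).trans (hz_eq.trans_le hge)

theorem exists_regret_minimizing_det_contract_general [Finite A] [Nonempty A]
    (hF : ∀ a ω, 0 ≤ F a ω) (r : Ω → ℝ) {C : Set (A → ℝ)} (hC : C.Nonempty) :
    ∃ pstar : Ω → ℝ, IsContract pstar ∧
      regret F r C pstar =
        sInf { x | ∃ p : Ω → ℝ, IsContract p ∧ x = regret F r C p } := by
  obtain ⟨p, hp, hmin⟩ := exists_isContract_forall_regret_le hF r hC
  have hleast : IsLeast { x | ∃ p : Ω → ℝ, IsContract p ∧ x = regret F r C p }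
      (regret F r C p) := by
    refine ⟨⟨p, hp, rfl⟩, ?_⟩
    rintro _ ⟨q, hq, rfl⟩
    exact hmin q hq
  exact ⟨p, hp, hleast.csInf_eq.symm⟩

end Contracts

/-- There exists a deterministic contract attaining the infimum of the
regret over all deterministic contracts. -/
theorem exists_regret_minimizing_det_contract
    {A Ω : Type} [Fintype A] [Fintype Ω] [Nonempty A] [Nonempty Ω]
    (F : A → Ω → ℝ) (r : Ω → ℝ) (C : Set (A → ℝ))
    (hInst : IsPAInstance F r C) :
    ∃ pstar : Ω → ℝ, IsContract pstar ∧
      regret F r C pstar =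
        sInf { x | ∃ p : Ω → ℝ, IsContract p ∧ x = regret F r C p } :=
  exists_regret_minimizing_det_contract_general (fun a ω ↦ (hInst.F_mem a ω).1) r
    hInst.C_nonempty
end

section
/- In any principal–agent instance with n := |A| actions, the infimum of R(Π) over menus Π of deterministic contracts of size exactly n equals the infimum of R(Π) over menus of deterministic contracts of all finite sizes K ≥ 1. -/
open Finset

variable {A Ω : Type} [Fintype A] [Fintype Ω] [Nonempty A] [Nonempty Ω]

/-- The agent's best-response utility under contract `p`. -/
noncomputable def agentBest (F : A → Ω → ℝ) (p : Ω → ℝ) (c : A → ℝ) : ℝ :=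
  ⨆ a : A, Uag F p c a

/-- Principal's expected utility `U^p(Π,c)` under a menu of deterministic contracts:
the agent selects an element maximizing its own utility, breaking ties in favor of
the principal. -/
noncomputable def UprinMenu (F : A → Ω → ℝ) (r : Ω → ℝ) {K : ℕ} (m : Fin K → Ω → ℝ)
    (c : A → ℝ) : ℝ :=
  sSup { x | ∃ i : Fin K, (∀ j : Fin K, agentBest F (m j) c ≤ agentBest F (m i) c) ∧
    x = Uprin F r (m i) c }

/-- The regret `R(Π)` of a menu of deterministic contracts. -/
noncomputable def regretMenu (F : A → Ω → ℝ) (r : Ω → ℝ) (C : Set (A → ℝ)) {K : ℕ}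
    (m : Fin K → Ω → ℝ) : ℝ :=
  sSup { x | ∃ c ∈ C, x = OPT F r c - UprinMenu F r m c }

/-!
Let `T a` be the largest expected payment that some entry of the menu attaches to action `a`. An
agent choosing an entry and an action together picks an action maximizing `T a - c a` and receives
exactly `T a` in expectation, so the principal's utility depends on the menu through `T` only.
Keeping, for each action, one entry that attains `T a` leaves `T` unchanged.
-/

section TieBreaking

variable {ι α : Type*}

/-- The values of `v` at the maximizers of `u`. Its supremum is the payoff `v` of a decision maker
who maximizes `u` and breaks ties in favor of `v`, as in `Uprin` and `UprinMenu`. -/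
def maximizerValues (u v : ι → ℝ) : Set ℝ :=
  {x | ∃ i, (∀ j, u j ≤ u i) ∧ x = v i}

theorem isGreatest_sSup_maximizerValues [Finite ι] [Nonempty ι] (u v : ι → ℝ) :
    IsGreatest (maximizerValues u v) (sSup (maximizerValues u v)) := by
  have hfin : (maximizerValues u v).Finite := by
    refine (Set.finite_range v).subset ?_
    rintro _ ⟨i, -, rfl⟩
    exact Set.mem_range_self i
  have hne : (maximizerValues u v).Nonempty := by
    obtain ⟨i, hi⟩ := Finite.exists_max u
    exact ⟨v i, i, hi, rfl⟩
  exact ⟨hne.csSup_mem hfin, fun _ hx => le_csSup hfin.bddAbove hx⟩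

theorem isGreatest_maximizerValues_uncurry [Finite ι] [Nonempty ι] [Finite α] [Nonempty α]
    (u v : ι → α → ℝ) :
    IsGreatest (maximizerValues (Function.uncurry u) (Function.uncurry v))
      (sSup (maximizerValues (fun i => ⨆ a, u i a)
        (fun i => sSup (maximizerValues (u i) (v i))))) := by
  have le_sup (i : ι) (a : α) : u i a ≤ ⨆ b, u i b := Finite.le_ciSup (u i) a
  obtain ⟨⟨i, hi, hval⟩, hub⟩ := isGreatest_sSup_maximizerValues (fun i => ⨆ a, u i a)
    (fun i => sSup (maximizerValues (u i) (v i)))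
  obtain ⟨a, ha, hval'⟩ := (isGreatest_sSup_maximizerValues (u i) (v i)).1
  refine ⟨⟨(i, a), fun ⟨j, b⟩ => ?_, hval.trans hval'⟩, ?_⟩
  · exact (le_sup j b).trans ((hi j).trans (ciSup_le ha))
  · rintro _ ⟨⟨j, b⟩, hjb, rfl⟩
    have hj (k : ι) : ⨆ a, u k a ≤ ⨆ a, u j a :=
      (ciSup_le fun a => hjb (k, a)).trans (le_sup j b)
    have hb (a : α) : u j a ≤ u j b := hjb (j, a)
    exact ((isGreatest_sSup_maximizerValues (u j) (v j)).2 ⟨b, hb, rfl⟩).trans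
      (hub ⟨j, hj, rfl⟩)

theorem maximizerValues_uncurry_sub [Finite ι] [Nonempty ι] (s : ι → α → ℝ) (c w : α → ℝ) :
    maximizerValues (Function.uncurry fun i a => s i a - c a)
        (Function.uncurry fun i a => w a - s i a) =
      maximizerValues (fun a => (⨆ i, s i a) - c a) (fun a => w a - ⨆ i, s i a) := by
  have le_sup (i : ι) (a : α) : s i a ≤ ⨆ j, s j a := Finite.le_ciSup (fun j => s j a) i
  ext x
  constructor
  · rintro ⟨⟨i, a⟩, hmax, rfl⟩
    have hi : ⨆ j, s j a = s i a :=
      (ciSup_le fun j => (sub_le_sub_iff_right _).1 (hmax (j, a))).antisymm (le_sup i a)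
    refine ⟨a, fun b => ?_, by simp only [Function.uncurry_apply_pair, hi]⟩
    obtain ⟨j, hj⟩ := exists_eq_ciSup_of_finite (f := fun j => s j b)
    simpa only [Function.uncurry_apply_pair, hi, ← hj] using hmax (j, b)
  · rintro ⟨a, hmax, rfl⟩
    obtain ⟨i, hi⟩ := exists_eq_ciSup_of_finite (f := fun i => s i a)
    refine ⟨(i, a), fun ⟨j, b⟩ => ?_, by simp only [Function.uncurry_apply_pair, hi]⟩
    calc s j b - c b ≤ (⨆ k, s k b) - c b := sub_le_sub_right (le_sup j b) _
      _ ≤ (⨆ k, s k a) - c a := hmax b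
      _ = s i a - c a := by rw [hi]

end TieBreaking

theorem exists_surjective_fin_of_card_le {α : Type*} [Finite α] [Nonempty α] {n : ℕ}
    (hn : Nat.card α ≤ n) : ∃ σ : Fin n → α, σ.Surjective :=
  Function.exists_surjective_iff.2
    ⟨inferInstance, ⟨(Finite.equivFin α).toEmbedding.trans (Fin.castLEEmb hn)⟩⟩

section Menus

variable {A Ω : Type} [Fintype Ω] {ι : Type*}

/-- The expectation of an outcome-indexed quantity (a payment or a reward) under action `a`. -/
noncomputable def expectedValue (F : A → Ω → ℝ) (v : Ω → ℝ) (a : A) : ℝ :=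
  ∑ ω, F a ω * v ω

/-- The largest expected payment that an entry of the menu `m` attaches to action `a`, through which
alone the menu affects the principal. The supremum is a maximum when `ι` is finite and nonempty. -/
noncomputable def menuPayment (F : A → Ω → ℝ) (m : ι → Ω → ℝ) (a : A) : ℝ :=
  ⨆ i, expectedValue F (m i) a

theorem prinAct_eq_sub (F : A → Ω → ℝ) (r p : Ω → ℝ) (a : A) :
    prinAct F r p a = expectedValue F r a - expectedValue F p a := by
  simp only [prinAct, expectedValue, mul_sub, Finset.sum_sub_distrib]

theorem isGreatest_UprinMenu [Finite A] [Nonempty A] {K : ℕ} [Nonempty (Fin K)]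
    (F : A → Ω → ℝ) (r : Ω → ℝ) (m : Fin K → Ω → ℝ) (c : A → ℝ) :
    IsGreatest (maximizerValues (fun a => menuPayment F m a - c a)
        (fun a => expectedValue F r a - menuPayment F m a))
      (UprinMenu F r m c) := by
  have hjoint : IsGreatest (maximizerValues (Function.uncurry fun i => Uag F (m i) c)
      (Function.uncurry fun i => prinAct F r (m i))) (UprinMenu F r m c) :=
    isGreatest_maximizerValues_uncurry _ _
  have hprin : (fun i => prinAct F r (m i)) =
      fun i a => expectedValue F r a - expectedValue F (m i) a :=
    funext₂ fun i => prinAct_eq_sub F r (m i)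
  rw [hprin] at hjoint
  exact maximizerValues_uncurry_sub (fun i => expectedValue F (m i)) c (expectedValue F r) ▸ hjoint

theorem UprinMenu_congr [Finite A] [Nonempty A] {K L : ℕ} [Nonempty (Fin K)] [Nonempty (Fin L)]
    {F : A → Ω → ℝ} {m : Fin K → Ω → ℝ} {m' : Fin L → Ω → ℝ}
    (h : menuPayment F m = menuPayment F m') (r : Ω → ℝ) :
    UprinMenu F r m = UprinMenu F r m' := by
  funext c
  have hm := isGreatest_UprinMenu F r m c
  rw [h] at hm
  exact hm.unique (isGreatest_UprinMenu F r m' c)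

theorem exists_submenu_menuPayment_eq [Finite ι] [Nonempty ι] {κ : Type*} [Finite κ]
    (F : A → Ω → ℝ) (m : ι → Ω → ℝ) {σ : κ → A} (hσ : σ.Surjective) :
    ∃ g : κ → ι, menuPayment F (m ∘ g) = menuPayment F m := by
  choose best hbest using fun a => exists_eq_ciSup_of_finite (f := fun i => expectedValue F (m i) a)
  refine ⟨best ∘ σ, funext fun a => ?_⟩
  obtain ⟨k, rfl⟩ := hσ a
  have : Nonempty κ := ⟨k⟩
  apply le_antisymm
  · exact ciSup_le fun j => Finite.le_ciSup (fun i => expectedValue F (m i) (σ k)) (best (σ j))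
  · calc menuPayment F m (σ k) = expectedValue F (m (best (σ k))) (σ k) := (hbest (σ k)).symm
      _ ≤ menuPayment F (m ∘ best ∘ σ) (σ k) :=
        Finite.le_ciSup (fun j => expectedValue F (m (best (σ j))) (σ k)) k

theorem regretMenu_congr {F : A → Ω → ℝ} {r : Ω → ℝ} {K L : ℕ} {m : Fin K → Ω → ℝ}
    {m' : Fin L → Ω → ℝ} (h : UprinMenu F r m = UprinMenu F r m') (C : Set (A → ℝ)) :
    regretMenu F r C m = regretMenu F r C m' := by
  simp only [regretMenu, h]

theorem menu_size_n_suffices_general [Finite A] [Nonempty A]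
    (F : A → Ω → ℝ) (r : Ω → ℝ) (C : Set (A → ℝ)) (P : Set (Ω → ℝ))
    {n : ℕ} (hn : Nat.card A ≤ n) :
    {x | ∃ m : Fin n → Ω → ℝ, (∀ i, m i ∈ P) ∧ x = regretMenu F r C m} =
      {x | ∃ K : ℕ, 0 < K ∧ ∃ m : Fin K → Ω → ℝ, (∀ i, m i ∈ P) ∧ x = regretMenu F r C m} := by
  have hpos : 0 < n := Nat.card_pos.trans_le hn
  ext x
  constructor
  · rintro ⟨m, hm, rfl⟩
    exact ⟨n, hpos, m, hm, rfl⟩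
  · rintro ⟨K, hK, m, hm, rfl⟩
    have : Nonempty (Fin n) := Fin.pos_iff_nonempty.1 hpos
    have : Nonempty (Fin K) := Fin.pos_iff_nonempty.1 hK
    obtain ⟨σ, hσ⟩ := exists_surjective_fin_of_card_le hn
    obtain ⟨g, hg⟩ := exists_submenu_menuPayment_eq F m hσ
    exact ⟨m ∘ g, fun k => hm (g k), regretMenu_congr (UprinMenu_congr hg.symm r) C⟩

end Menus

/-- The infimum of the regret over menus of deterministic contracts of
size exactly `n = |A|` equals the infimum over menus of all finite sizes `K ≥ 1`. -/
theorem menu_size_n_suffices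
    {A Ω : Type} [Fintype A] [Fintype Ω] [Nonempty A] [Nonempty Ω]
    (F : A → Ω → ℝ) (r : Ω → ℝ) (C : Set (A → ℝ))
    (hInst : IsPAInstance F r C) :
    sInf { x | ∃ m : Fin (Fintype.card A) → Ω → ℝ,
        (∀ i, IsContract (m i)) ∧ x = regretMenu F r C m }
      = sInf { x | ∃ K : ℕ, 0 < K ∧ ∃ m : Fin K → Ω → ℝ,
          (∀ i, IsContract (m i)) ∧ x = regretMenu F r C m } := by
  exact congrArg sInf
    (menu_size_n_suffices_general F r C {p | IsContract p} Nat.card_eq_fintype_card.le)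
end
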